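/- Let R > 1 and Γ*(x) := min{|x|^{−(N−2s)}, R^{−(N−2s)}}. Then for every nonnegative smooth function φ compactly supported in ℝ^N ∖ B̄_R, the (absolutely convergent) integral ∫_{ℝ^N}∫_{ℝ^N} (Γ*(x)−Γ*(y))(φ(x)−φ(y)) |x−y|^{−(N+2s)} dx dy is nonnegative; that is, Γ* is a weak supersolution of the fractional Laplacian in ℝ^N ∖ B̄_R. -/

import Mathlib

open MeasureTheory Filter Topology

noncomputable section

/-- The truncated fundamental solution `Γ*(x) = min{|x|^{−(N−2s)}, R^{−(N−2s)}}`. -/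
def Gammastar (N : ℕ) (s R : ℝ) (x : EuclideanSpace ℝ (Fin N)) : ℝ :=
  min (‖x‖ ^ (-((N : ℝ) - 2 * s))) (R ^ (-((N : ℝ) - 2 * s)))

abbrev EE (N : ℕ) := EuclideanSpace ℝ (Fin N)

/-- Integrability of the Levy kernel. -/
lemma levy_integrable (N : ℕ) (hN : 0 < N) (s : ℝ) (hs0 : 0 < s) (hs1 : s < 1) :
    Integrable (fun h : EE N => min 1 (‖h‖ ^ 2) * ‖h‖ ^ (-((N : ℝ) + 2 * s))) := by
  have : Nonempty (Fin N) := ⟨⟨0, hN⟩⟩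
  have : Nontrivial (EE N) := inferInstance
  refine (integrable_fun_norm_addHaar (E := EE N) (μ := volume)
    (f := fun r : ℝ => min 1 (r ^ 2) * r ^ (-((N : ℝ) + 2 * s)))).2 ?_
  have hfr : Module.finrank ℝ (EE N) = N := by simp
  rw [hfr]
  have key : ∀ r : ℝ, 0 < r → r ^ (N - 1) * r ^ (-((N : ℝ) + 2 * s)) = r ^ (-1 - 2 * s) := by
    intro r hr
    rw [← Real.rpow_natCast, ← Real.rpow_add hr]
    congr 1
    rw [Nat.cast_sub (by omega)]; push_cast; ring
  rw [← Set.Ioc_union_Ioi_eq_Ioi (zero_le_one : (0:ℝ) ≤ 1)]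
  refine IntegrableOn.union ?_ ?_
  · have h1 : IntegrableOn (fun r : ℝ => r ^ (1 - 2 * s)) (Set.Ioc 0 1) := by
      rw [integrableOn_Ioc_iff_integrableOn_Ioo,
        intervalIntegral.integrableOn_Ioo_rpow_iff one_pos]
      linarith
    refine h1.congr_fun ?_ measurableSet_Ioc
    intro r hr
    have h2 : min 1 (r ^ 2) = r ^ 2 := min_eq_right (by nlinarith [hr.1, hr.2])
    simp only [smul_eq_mul]
    rw [h2, mul_left_comm, key r hr.1, ← Real.rpow_natCast, ← Real.rpow_add hr.1]
    congr 1; push_cast; ring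
  · have h1 : IntegrableOn (fun r : ℝ => r ^ (-1 - 2 * s)) (Set.Ioi 1) :=
      integrableOn_Ioi_rpow_of_lt (by linarith) one_pos
    refine h1.congr_fun ?_ measurableSet_Ioi
    intro r hr
    have hr' : (1:ℝ) < r := hr
    have h2 : min 1 (r ^ 2) = 1 := min_eq_left (by nlinarith)
    simp only [smul_eq_mul]
    rw [h2, mul_left_comm, key r (by linarith), one_mul]

/-- A regular version of the truncated fundamental solution. -/
def GG (N : ℕ) (a R : ℝ) (x : EE N) : ℝ := (max ‖x‖ R) ^ (-a)

lemma GG_nonneg (N : ℕ) (a R : ℝ) (hR : 1 < R) (x : EE N) : 0 ≤ GG N a R x :=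
  Real.rpow_nonneg (le_trans (by linarith) (le_max_right _ _)) _

lemma GG_le_one (N : ℕ) (a R : ℝ) (ha : 0 < a) (hR : 1 < R) (x : EE N) : GG N a R x ≤ 1 :=
  Real.rpow_le_one_of_one_le_of_nonpos (le_trans hR.le (le_max_right _ _)) (by linarith)

lemma GG_cont (N : ℕ) (a R : ℝ) (hR : 1 < R) : Continuous (GG N a R) := by
  unfold GG
  refine Continuous.rpow_const (by fun_prop) ?_
  intro x; left
  have := le_max_right ‖x‖ R
  linarith

lemma GG_lip (N : ℕ) (a R : ℝ) (ha : 0 < a) (hR : 1 < R) (x y : EE N) :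
    |GG N a R x - GG N a R y| ≤ a * ‖x - y‖ := by
  have h := (convex_Ici (1:ℝ)).norm_image_sub_le_of_norm_deriv_le
    (f := fun t : ℝ => t ^ (-a)) (C := a) (x := max ‖y‖ R) (y := max ‖x‖ R)
    (fun t ht => by
      have : (1:ℝ) ≤ t := ht
      exact Real.differentiableAt_rpow_const_of_ne _ (by linarith))
    (fun t ht => by
      have ht' : (1:ℝ) ≤ t := ht
      rw [Real.deriv_rpow_const, norm_mul, Real.norm_eq_abs, abs_neg, abs_of_pos ha]
      have h1 : ‖t ^ (-a - 1)‖ ≤ 1 := by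
        rw [Real.norm_eq_abs, abs_of_nonneg (Real.rpow_nonneg (by linarith) _)]
        exact Real.rpow_le_one_of_one_le_of_nonpos ht' (by linarith)
      nlinarith)
    (le_trans hR.le (le_max_right _ _)) (le_trans hR.le (le_max_right _ _))
  refine h.trans (mul_le_mul_of_nonneg_left ?_ ha.le)
  rw [Real.norm_eq_abs]
  exact (abs_max_sub_max_le_abs _ _ _).trans (abs_norm_sub_norm_le x y)

lemma Gammastar_eq' (N : ℕ) (a R : ℝ) (ha : 0 < a) (hR : 1 < R) (x : EE N) (hx : x ≠ 0) :
    min (‖x‖ ^ (-a)) (R ^ (-a)) = GG N a R x := by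
  have hx' : 0 < ‖x‖ := norm_pos_iff.2 hx
  unfold GG
  rcases le_total ‖x‖ R with h | h
  · rw [max_eq_right h, min_eq_right]
    exact Real.rpow_le_rpow_of_nonpos hx' h (by linarith)
  · rw [max_eq_left h, min_eq_left]
    exact Real.rpow_le_rpow_of_nonpos (by linarith) h (by linarith)

lemma GG_le (N : ℕ) (a R : ℝ) (ha : 0 < a) (hR : 1 < R) (x : EE N) (hx : x ≠ 0) :
    GG N a R x ≤ ‖x‖ ^ (-a) := by
  rw [← Gammastar_eq' N a R ha hR x hx]; exact min_le_left _ _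

lemma GG_eq (N : ℕ) (a R : ℝ) (x : EE N) (hx : R < ‖x‖) :
    GG N a R x = ‖x‖ ^ (-a) := by
  unfold GG; rw [max_eq_left hx.le]

/-- Product integrability. -/
lemma prod_int (N : ℕ) (f k : EE N → ℝ) (hf : Integrable f) (hk : Integrable k)
    (hev : ∀ x, k (-x) = k x) :
    Integrable (fun z : EE N × EE N => f z.1 * k (z.1 - z.2)) := by
  have h := hf.mul_prod hk
  have h2 := (measurePreserving_prod_sub (volume : Measure (EE N)) (volume : Measure (EE N))
    ).integrable_comp_of_integrable h
  refine h2.congr (Eventually.of_forall fun z => ?_)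
  simp only [Function.comp]
  rw [← neg_sub z.1 z.2, hev]

/-- The invariant region. -/
def AA (N : ℕ) (ε : ℝ) (x : EE N) : Set (EE N) := {y | y ≠ 0 ∧ ε * ‖x‖ * ‖y‖ < ‖x - y‖ ^ 2}

lemma AA_lower (N : ℕ) (ε : ℝ) (hε : 0 < ε) (x y : EE N) (hx : 1 < ‖x‖)
    (hy : ε * ‖x‖ * ‖y‖ < ‖x - y‖ ^ 2) : min (1/4) (ε / 2) ≤ min 1 (‖x - y‖ ^ 2) := by
  refine le_min ((min_le_left _ _).trans (by norm_num)) ?_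
  rcases le_total ‖y‖ (1/2) with h | h
  · refine (min_le_left _ _).trans ?_
    have := norm_sub_norm_le x y
    nlinarith
  · refine (min_le_right _ _).trans ?_
    have : ε * (1/2) ≤ ε * ‖x‖ * ‖y‖ := by
      rw [mul_assoc]; exact mul_le_mul_of_nonneg_left (by nlinarith) hε.le
    linarith

lemma inv_det (N : ℕ) (c : ℝ) (x : EE N) :
    |((c • ((ℝ ∙ x)ᗮ.reflection : EE N →L[ℝ] EE N)) : EE N →L[ℝ] EE N).det| = |c| ^ N := by
  have h : ((c • ((ℝ ∙ x)ᗮ.reflection : EE N →L[ℝ] EE N)) : EE N →L[ℝ] EE N).det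
      = c ^ N * (-1) ^ (Module.finrank ℝ (ℝ ∙ x)ᗮᗮ) := by
    rw [← Submodule.det_reflection, ContinuousLinearMap.det]
    have : (↑(c • ((ℝ ∙ x)ᗮ.reflection : EE N →L[ℝ] EE N)) : EE N →ₗ[ℝ] EE N)
      = c • ((ℝ ∙ x)ᗮ.reflection.toLinearMap) := rfl
    rw [this, LinearMap.det_smul]; simp
  rw [h, abs_mul, abs_pow, abs_pow, abs_neg, abs_one, one_pow, mul_one]

open EuclideanGeometry in
lemma inv_facts (N : ℕ) (x y : EE N) (hx : x ≠ 0) (hy : y ≠ 0) :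
    ‖inversion (0 : EE N) ‖x‖ y‖ = ‖x‖ ^ 2 / ‖y‖ ∧
    ‖x - inversion (0 : EE N) ‖x‖ y‖ = ‖x‖ / ‖y‖ * ‖x - y‖ := by
  have hx' : 0 < ‖x‖ := norm_pos_iff.2 hx
  have hy' : 0 < ‖y‖ := norm_pos_iff.2 hy
  constructor
  · have := dist_inversion_center (0 : EE N) y ‖x‖
    simpa [dist_zero_right] using this
  · have h1 : inversion (0 : EE N) ‖x‖ x = x := by
      have := inversion_dist_center (0 : EE N) x
      rwa [dist_zero_right] at this
    have h2 := dist_inversion_inversion (c := (0 : EE N)) hx hy ‖x‖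
    rw [h1, dist_zero_right, dist_zero_right, dist_eq_norm, dist_eq_norm] at h2
    rw [h2]; field_simp

lemma AA_meas (N : ℕ) (ε : ℝ) (x : EE N) : MeasurableSet (AA N ε x) := by
  unfold AA
  refine MeasurableSet.inter (measurableSet_singleton (0 : EE N)).compl ?_
  have h : IsOpen {y : EE N | ε * ‖x‖ * ‖y‖ < ‖x - y‖ ^ 2} :=
    isOpen_lt (by fun_prop) (by fun_prop)
  exact h.measurableSet

open EuclideanGeometry in
lemma AA_maps (N : ℕ) (ε : ℝ) (x : EE N) (hx : x ≠ 0) (y : EE N) (hy : y ∈ AA N ε x) :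
    inversion (0 : EE N) ‖x‖ y ∈ AA N ε x := by
  have hx' : 0 < ‖x‖ := norm_pos_iff.2 hx
  obtain ⟨hy0, hy1⟩ := hy
  have hy' : 0 < ‖y‖ := norm_pos_iff.2 hy0
  obtain ⟨h1, h2⟩ := inv_facts N x y hx hy0
  refine ⟨?_, ?_⟩
  · rw [Ne, inversion_eq_center hx'.ne']; exact hy0
  · rw [h1, h2, mul_pow]
    have : ε * ‖x‖ * (‖x‖ ^ 2 / ‖y‖) = (‖x‖ / ‖y‖) ^ 2 * (ε * ‖x‖ * ‖y‖) := by
      field_simp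
    rw [this]
    exact mul_lt_mul_of_pos_left hy1 (by positivity)

open EuclideanGeometry in
lemma AA_image (N : ℕ) (ε : ℝ) (x : EE N) (hx : x ≠ 0) :
    inversion (0 : EE N) ‖x‖ '' AA N ε x = AA N ε x := by
  ext y
  constructor
  · rintro ⟨z, hz, rfl⟩; exact AA_maps N ε x hx z hz
  · intro hy
    exact ⟨_, AA_maps N ε x hx y hy, inversion_inversion _ (norm_ne_zero_iff.2 hx) _⟩

lemma core_ineq (N : ℕ) (s : ℝ) (ρ r d gx gy gz : ℝ) (hρ : 0 < ρ) (hr : 0 < r) (hd : 0 < d)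
    (hgx : gx = ρ ^ (-((N : ℝ) - 2 * s))) (hgy : gy ≤ r ^ (-((N : ℝ) - 2 * s)))
    (hgz : gz ≤ (ρ ^ 2 / r) ^ (-((N : ℝ) - 2 * s))) :
    0 ≤ (gx - gy) * d ^ (-((N : ℝ) + 2 * s)) +
      ((ρ / r) ^ 2) ^ N * ((gx - gz) * (ρ / r * d) ^ (-((N : ℝ) + 2 * s))) := by
  set a : ℝ := (N : ℝ) - 2 * s with ha
  have hq : 0 < ρ / r := by positivity
  have e1 : (ρ / r * d) ^ (-((N : ℝ) + 2 * s)) =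
      (ρ / r) ^ (-((N : ℝ) + 2 * s)) * d ^ (-((N : ℝ) + 2 * s)) :=
    Real.mul_rpow hq.le hd.le
  have e2 : ((ρ / r) ^ 2) ^ N * (ρ / r) ^ (-((N : ℝ) + 2 * s)) = (ρ / r) ^ a := by
    rw [← pow_mul, ← Real.rpow_natCast, ← Real.rpow_add hq]
    congr 1; push_cast; rw [ha]; ring
  have hK : 0 < d ^ (-((N : ℝ) + 2 * s)) := Real.rpow_pos_of_pos hd _
  have e3 : ((ρ / r) ^ 2) ^ N * ((gx - gz) * (ρ / r * d) ^ (-((N : ℝ) + 2 * s))) =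
      ((ρ / r) ^ a * (gx - gz)) * d ^ (-((N : ℝ) + 2 * s)) := by
    rw [e1, ← e2]; ring
  rw [e3, ← add_mul]
  refine mul_nonneg ?_ hK.le
  have hqa : 0 < (ρ / r) ^ a := Real.rpow_pos_of_pos hq _
  have e4 : (ρ / r) ^ a * ρ ^ (-a) = r ^ (-a) := by
    rw [Real.div_rpow hρ.le hr.le, Real.rpow_neg hρ.le, Real.rpow_neg hr.le]
    have := (Real.rpow_pos_of_pos hρ a).ne'
    field_simp
  have e5 : (ρ / r) ^ a * (ρ ^ 2 / r) ^ (-a) = ρ ^ (-a) := by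
    rw [Real.rpow_neg (by positivity), ← Real.inv_rpow (by positivity),
      ← Real.mul_rpow hq.le (by positivity), Real.rpow_neg hρ.le, ← Real.inv_rpow hρ.le]
    congr 1
    field_simp
  have h6 : (ρ / r) ^ a * gz ≤ ρ ^ (-a) := by
    rw [← e5]; exact mul_le_mul_of_nonneg_left hgz hqa.le
  rw [mul_sub, hgx, e4]
  linarith

lemma inner_int (N : ℕ) (hN : 0 < N) (s : ℝ) (hs0 : 0 < s) (hs1 : s < 1) (ε : ℝ) (hε : 0 < ε)
    (a R : ℝ) (ha : 0 < a) (hR : 1 < R) (x : EE N) (hx : R < ‖x‖) :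
    IntegrableOn (fun y => (GG N a R x - GG N a R y) * ‖x - y‖ ^ (-((N : ℝ) + 2 * s)))
      (AA N ε x) := by
  set δ : ℝ := min (1/4) (ε / 2) with hδ
  have hδ0 : 0 < δ := lt_min (by norm_num) (by linarith)
  have hk := ((levy_integrable N hN s hs0 hs1).comp_sub_left x).const_mul δ⁻¹
  refine Integrable.mono' hk.integrableOn ?_ ?_
  · refine AEStronglyMeasurable.restrict (Measurable.aestronglyMeasurable ?_)
    have := (GG_cont N a R hR).measurable
    fun_prop
  · refine (ae_restrict_iff' (AA_meas N ε x)).2 (Eventually.of_forall fun y hy => ?_)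
    have h1 := AA_lower N ε hε x y (hR.trans hx) hy.2
    have hK : 0 ≤ ‖x - y‖ ^ (-((N : ℝ) + 2 * s)) := Real.rpow_nonneg (norm_nonneg _) _
    rw [norm_mul, Real.norm_eq_abs, Real.norm_eq_abs, abs_of_nonneg hK, ← mul_assoc]
    refine mul_le_mul_of_nonneg_right ?_ hK
    have h2 : |GG N a R x - GG N a R y| ≤ 1 := by
      have := GG_nonneg N a R hR x
      have := GG_nonneg N a R hR y
      have := GG_le_one N a R ha hR x
      have := GG_le_one N a R ha hR y
      rw [abs_le]; constructor <;> linarith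
    refine h2.trans ?_
    rw [← div_eq_inv_mul, le_div_iff₀ hδ0, one_mul]
    exact h1

open EuclideanGeometry in
lemma inner_nonneg' (N : ℕ) (hN : 0 < N) (s : ℝ) (hs0 : 0 < s) (hs1 : s < 1) (ε : ℝ) (hε : 0 < ε)
    (R : ℝ) (ha : 0 < (N : ℝ) - 2 * s) (hR : 1 < R) (x : EE N) (hx : R < ‖x‖) :
    0 ≤ ∫ y in AA N ε x, (GG N ((N : ℝ) - 2 * s) R x - GG N ((N : ℝ) - 2 * s) R y) *
      ‖x - y‖ ^ (-((N : ℝ) + 2 * s)) := by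
  have hxp : 0 < ‖x‖ := by linarith
  have hx0 : x ≠ 0 := norm_pos_iff.1 hxp
  have hI := inner_int N hN s hs0 hs1 ε hε _ R ha hR x hx
  set F : EE N → ℝ := fun y => (GG N ((N : ℝ) - 2 * s) R x - GG N ((N : ℝ) - 2 * s) R y) *
      ‖x - y‖ ^ (-((N : ℝ) + 2 * s)) with hF
  set D : EE N → EE N →L[ℝ] EE N := fun y =>
    ((‖x‖ / dist y 0) ^ 2 • ((ℝ ∙ (y - 0))ᗮ.reflection : EE N →L[ℝ] EE N)) with hD
  have hder : ∀ y ∈ AA N ε x,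
      HasFDerivWithinAt (inversion (0 : EE N) ‖x‖) (D y) (AA N ε x) y := fun y hy =>
    (hasFDerivAt_inversion hy.1).hasFDerivWithinAt
  have hinj : Set.InjOn (inversion (0 : EE N) ‖x‖) (AA N ε x) :=
    (inversion_injective _ hxp.ne').injOn
  have e1 := integral_image_eq_integral_abs_det_fderiv_smul volume (AA_meas N ε x) hder hinj F
  have e2 := (integrableOn_image_iff_integrableOn_abs_det_fderiv_smul volume
    (AA_meas N ε x) hder hinj F).1
  rw [AA_image N ε x hx0] at e1 e2
  have e3 := e2 hI
  have e4 : 0 ≤ ∫ y in AA N ε x, (F y + |(D y).det| • F (inversion (0 : EE N) ‖x‖ y)) := by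
    refine setIntegral_nonneg (AA_meas N ε x) fun y hy => ?_
    have hyp : 0 < ‖y‖ := norm_pos_iff.2 hy.1
    obtain ⟨h1, h2⟩ := inv_facts N x y hx0 hy.1
    have hd : 0 < ‖x - y‖ := by
      rcases (norm_nonneg (x - y)).lt_or_eq with h | h
      · exact h
      · exfalso
        have := hy.2
        rw [← h] at this
        have h5 : 0 ≤ ε * ‖x‖ * ‖y‖ := by positivity
        norm_num at this
        linarith
    rw [hD, hF]
    simp only
    rw [inv_det, h2, smul_eq_mul, dist_zero_right, abs_of_nonneg (by positivity)]
    refine core_ineq N s ‖x‖ ‖y‖ ‖x - y‖ _ _ _ hxp hyp hd (GG_eq N _ R x hx)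
      (GG_le N _ R ha hR y hy.1) ?_
    rw [← h1]
    exact GG_le N _ R ha hR _ (AA_maps N ε x hx0 y hy).1
  rw [integral_add hI e3, ← e1] at e4
  linarith

lemma min_bound (u C c d : ℝ) (hc : 0 ≤ c) (hC : 0 ≤ C) (h1 : u ≤ C) (h2 : u ≤ c * d)
    (hd : 0 ≤ d) : u ≤ (C + c) * min 1 d := by
  rcases le_total 1 d with h | h
  · rw [min_eq_left h]; linarith
  · rw [min_eq_right h]; nlinarith

lemma min_sq (d : ℝ) (hd : 0 ≤ d) : min 1 d * min 1 d = min 1 (d ^ 2) := by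
  rcases le_total 1 d with h | h
  · rw [min_eq_left h, min_eq_left (by nlinarith)]; norm_num
  · rw [min_eq_right h, min_eq_right (by nlinarith)]; ring

lemma main_int (N : ℕ) (hN : 0 < N) (s : ℝ) (hs0 : 0 < s) (hs1 : s < 1)
    (a R : ℝ) (ha : 0 < a) (hR : 1 < R) (φ : EE N → ℝ)
    (hφ_smooth : ContDiff ℝ (⊤ : ℕ∞) φ) (hφ_supp : HasCompactSupport φ) :
    Integrable (fun z : EE N × EE N => (GG N a R z.1 - GG N a R z.2) * (φ z.1 - φ z.2) *
        ‖z.1 - z.2‖ ^ (-((N : ℝ) + 2 * s))) := by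
  obtain ⟨B, hB⟩ := hφ_supp.exists_bound_of_continuous hφ_smooth.continuous
  obtain ⟨L, hL⟩ := hφ_smooth.lipschitzWith_of_hasCompactSupport hφ_supp (by simp)
  have hB0 : 0 ≤ B := (norm_nonneg _).trans (hB 0)
  set k : EE N → ℝ := fun h => min 1 (‖h‖ ^ 2) * ‖h‖ ^ (-((N : ℝ) + 2 * s)) with hk
  have hk0 : ∀ h, 0 ≤ k h := fun h =>
    mul_nonneg (le_min zero_le_one (by positivity)) (Real.rpow_nonneg (norm_nonneg _) _)
  have hkev : ∀ h, k (-h) = k h := fun h => by simp [hk]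
  have hkint : Integrable k := levy_integrable N hN s hs0 hs1
  set χ : EE N → ℝ := (tsupport φ).indicator (fun _ => (1 : ℝ)) with hχ
  have hχ0 : ∀ x, 0 ≤ χ x := fun x => Set.indicator_nonneg (fun _ _ => zero_le_one) x
  have hχint : Integrable χ := by
    have hK : IsCompact (tsupport φ) := hφ_supp
    refine (integrable_indicator_iff hK.measurableSet).2 ?_
    exact integrableOn_const hK.measure_lt_top.ne
  have i1 := prod_int N χ k hχint hkint hkev
  have i2 : Integrable (fun z : EE N × EE N => χ z.2 * k (z.1 - z.2)) := by
    refine i1.swap.congr (Eventually.of_forall fun z => ?_)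
    simp only [Function.comp, Prod.fst_swap, Prod.snd_swap]
    rw [← hkev, neg_sub]
  refine Integrable.mono' ((i1.add i2).const_mul ((1 + a) * (2 * B + L))) ?_ ?_
  · have := (GG_cont N a R hR).measurable
    have := hφ_smooth.continuous.measurable
    exact Measurable.aestronglyMeasurable (by fun_prop)
  · refine Eventually.of_forall fun z => ?_
    obtain ⟨x, y⟩ := z
    simp only [Pi.add_apply]
    have hK : 0 ≤ ‖x - y‖ ^ (-((N : ℝ) + 2 * s)) := Real.rpow_nonneg (norm_nonneg _) _
    have hd := norm_nonneg (x - y)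
    by_cases hz : φ x - φ y = 0
    · rw [hz, mul_zero, zero_mul, norm_zero]
      have := hχ0 x
      have := hχ0 y
      have := hk0 (x - y)
      positivity
    have hχ1 : 1 ≤ χ x + χ y := by
      by_cases h1 : x ∈ tsupport φ
      · have : χ x = 1 := Set.indicator_of_mem h1 _
        linarith [hχ0 y]
      · by_cases h2 : y ∈ tsupport φ
        · have : χ y = 1 := Set.indicator_of_mem h2 _
          linarith [hχ0 x]
        · exact absurd (by rw [image_eq_zero_of_notMem_tsupport h1,
            image_eq_zero_of_notMem_tsupport h2, sub_zero]) hz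
    have g1 : |GG N a R x - GG N a R y| ≤ (1 + a) * min 1 ‖x - y‖ := by
      refine min_bound _ _ _ _ ha.le zero_le_one ?_ (GG_lip N a R ha hR x y) hd
      have := GG_nonneg N a R hR x
      have := GG_nonneg N a R hR y
      have := GG_le_one N a R ha hR x
      have := GG_le_one N a R ha hR y
      rw [abs_le]; constructor <;> linarith
    have g2 : |φ x - φ y| ≤ (2 * B + L) * min 1 ‖x - y‖ := by
      refine min_bound _ _ _ _ L.2 (by linarith) ?_ ?_ hd
      · have := norm_sub_le (φ x) (φ y)
        rw [Real.norm_eq_abs] at this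
        linarith [hB x, hB y]
      · have := hL.dist_le_mul x y
        rwa [dist_eq_norm, dist_eq_norm, Real.norm_eq_abs] at this
    have hm : 0 ≤ min 1 ‖x - y‖ := le_min zero_le_one hd
    have hC : 0 ≤ (1 + a) * (2 * B + L) :=
      mul_nonneg (by linarith) (add_nonneg (by linarith) L.2)
    rw [norm_mul, norm_mul, Real.norm_eq_abs, Real.norm_eq_abs, Real.norm_eq_abs, abs_of_nonneg hK]
    calc _ ≤ ((1 + a) * min 1 ‖x - y‖) * ((2 * B + L) * min 1 ‖x - y‖) *
            ‖x - y‖ ^ (-((N : ℝ) + 2 * s)) := by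
          refine mul_le_mul_of_nonneg_right ?_ hK
          exact mul_le_mul g1 g2 (abs_nonneg _) (mul_nonneg (by linarith) hm)
      _ = ((1 + a) * (2 * B + L)) * k (x - y) := by
          simp only [hk]; rw [← min_sq _ hd]; ring
      _ ≤ ((1 + a) * (2 * B + L)) * (χ x * k (x - y) + χ y * k (x - y)) := by
          refine mul_le_mul_of_nonneg_left ?_ hC
          rw [← add_mul]
          nlinarith [hk0 (x - y)]

/-- The symmetric region. -/
def A2 (N : ℕ) (ε : ℝ) : Set (EE N × EE N) := {z | ε * ‖z.1‖ * ‖z.2‖ < ‖z.1 - z.2‖ ^ 2}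

lemma A2_meas (N : ℕ) (ε : ℝ) : MeasurableSet (A2 N ε) := by
  have h : IsOpen (A2 N ε) := isOpen_lt (by fun_prop) (by fun_prop)
  exact h.measurableSet

lemma trunc_nonneg (N : ℕ) (hN : 0 < N) (s : ℝ) (hs0 : 0 < s) (hs1 : s < 1)
    (R : ℝ) (ha : 0 < (N : ℝ) - 2 * s) (hR : 1 < R) (φ : EE N → ℝ)
    (hφ_cont : Continuous φ) (hφ_supp : HasCompactSupport φ)
    (hφ_loc : tsupport φ ⊆ {x : EE N | R < ‖x‖})
    (hφ_nonneg : ∀ x, 0 ≤ φ x) (ε : ℝ) (hε : 0 < ε) :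
    0 ≤ ∫ z : EE N × EE N, (A2 N ε).indicator (fun z =>
      (GG N ((N : ℝ) - 2 * s) R z.1 - GG N ((N : ℝ) - 2 * s) R z.2) * (φ z.1 - φ z.2) *
        ‖z.1 - z.2‖ ^ (-((N : ℝ) + 2 * s))) z := by
  have : Nonempty (Fin N) := ⟨⟨0, hN⟩⟩
  have : Nontrivial (EE N) := inferInstance
  set a : ℝ := (N : ℝ) - 2 * s with haa
  set k : EE N → ℝ := fun h => min 1 (‖h‖ ^ 2) * ‖h‖ ^ (-((N : ℝ) + 2 * s)) with hk
  have hkev : ∀ h, k (-h) = k h := fun h => by simp [hk]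
  have hkint : Integrable k := levy_integrable N hN s hs0 hs1
  have hφint : Integrable φ := hφ_cont.integrable_of_hasCompactSupport hφ_supp
  have i1 := prod_int N φ k hφint hkint hkev
  set δ : ℝ := min (1/4) (ε / 2) with hδ
  have hδ0 : 0 < δ := lt_min (by norm_num) (by linarith)
  set f : EE N × EE N → ℝ := (A2 N ε).indicator (fun z =>
      φ z.1 * ((GG N a R z.1 - GG N a R z.2) * ‖z.1 - z.2‖ ^ (-((N : ℝ) + 2 * s)))) with hf
  have hφR : ∀ x, φ x ≠ 0 → R < ‖x‖ := fun x hx =>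
    hφ_loc (subset_tsupport φ hx)
  have hfint : Integrable f := by
    refine Integrable.mono' (i1.const_mul δ⁻¹) ?_ ?_
    · have := (GG_cont N a R hR).measurable
      have := hφ_cont.measurable
      refine Measurable.aestronglyMeasurable (Measurable.indicator (by fun_prop) (A2_meas N ε))
    · refine Eventually.of_forall fun z => ?_
      obtain ⟨x, y⟩ := z
      have hK : 0 ≤ ‖x - y‖ ^ (-((N : ℝ) + 2 * s)) := Real.rpow_nonneg (norm_nonneg _) _
      have hk0 : 0 ≤ k (x - y) := mul_nonneg (le_min zero_le_one (by positivity)) hK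
      have hrhs : 0 ≤ δ⁻¹ * (φ x * k (x - y)) :=
        mul_nonneg (inv_nonneg.2 hδ0.le) (mul_nonneg (hφ_nonneg x) hk0)
      by_cases hz : (x, y) ∈ A2 N ε
      · rw [hf, Set.indicator_of_mem hz]
        simp only
        by_cases hx : φ x = 0
        · simp [hx]
        have h1 := AA_lower N ε hε x y (hR.trans (hφR x hx)) hz
        rw [norm_mul, norm_mul, Real.norm_eq_abs, Real.norm_eq_abs, Real.norm_eq_abs,
          abs_of_nonneg hK, abs_of_nonneg (hφ_nonneg x), mul_left_comm δ⁻¹]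
        refine mul_le_mul_of_nonneg_left ?_ (hφ_nonneg x)
        simp only [hk]
        rw [← mul_assoc]
        refine mul_le_mul_of_nonneg_right ?_ hK
        have h2 : |GG N a R x - GG N a R y| ≤ 1 := by
          have := GG_nonneg N a R hR x
          have := GG_nonneg N a R hR y
          have := GG_le_one N a R ha hR x
          have := GG_le_one N a R ha hR y
          rw [abs_le]; constructor <;> linarith
        refine h2.trans ?_
        rw [← div_eq_inv_mul, le_div_iff₀ hδ0, one_mul]
        exact h1
      · rw [hf, Set.indicator_of_notMem hz, norm_zero]
        exact hrhs
  have hf0 : 0 ≤ ∫ z, f z := by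
    have e : ∫ z, f z = ∫ x, ∫ y, f (x, y) := integral_prod f hfint
    rw [e]
    refine integral_nonneg fun x => ?_
    simp only [Pi.zero_apply]
    by_cases hx : φ x = 0
    · have : ∀ y, f (x, y) = 0 := fun y => by
        rw [hf]; simp [Set.indicator, hx]
      simp [this]
    · have hxR := hφR x hx
      have h := inner_nonneg' N hN s hs0 hs1 ε hε R ha hR x hxR
      have e2 : ∫ y, f (x, y) = φ x * ∫ y in AA N ε x, (GG N a R x - GG N a R y) *
          ‖x - y‖ ^ (-((N : ℝ) + 2 * s)) := by
        rw [← integral_const_mul, ← integral_indicator (AA_meas N ε x)]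
        refine integral_congr_ae ?_
        have h0 : ∀ᵐ y : EE N, y ≠ 0 := by
          simp [ae_iff]
        filter_upwards [h0] with y hy
        by_cases hm : ε * ‖x‖ * ‖y‖ < ‖x - y‖ ^ 2
        · rw [hf, Set.indicator_of_mem (show (x, y) ∈ A2 N ε from hm),
            Set.indicator_of_mem (show y ∈ AA N ε x from ⟨hy, hm⟩)]
        · rw [hf, Set.indicator_of_notMem (show (x, y) ∉ A2 N ε from hm),
            Set.indicator_of_notMem (show y ∉ AA N ε x from fun h => hm h.2)]
      rw [e2]
      exact mul_nonneg (hφ_nonneg x) h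
  have hswap : ∫ z, f (Prod.swap z) = ∫ z, f z := by
    exact integral_prod_swap f
  have hsum : (fun z : EE N × EE N => (A2 N ε).indicator (fun z =>
      (GG N a R z.1 - GG N a R z.2) * (φ z.1 - φ z.2) *
        ‖z.1 - z.2‖ ^ (-((N : ℝ) + 2 * s))) z) = fun z => f z + f (Prod.swap z) := by
    funext z
    obtain ⟨x, y⟩ := z
    have hsym : (Prod.swap (x, y)) ∈ A2 N ε ↔ (x, y) ∈ A2 N ε := by
      simp only [A2, Set.mem_ofPred_eq, Prod.swap_prod_mk]
      rw [norm_sub_rev y x, mul_right_comm]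
    by_cases hm : (x, y) ∈ A2 N ε
    · rw [hf, Set.indicator_of_mem hm, Set.indicator_of_mem hm, Set.indicator_of_mem (hsym.2 hm)]
      simp only [Prod.swap_prod_mk]
      rw [norm_sub_rev y x]; ring
    · rw [hf, Set.indicator_of_notMem hm, Set.indicator_of_notMem hm,
        Set.indicator_of_notMem (fun h => hm (hsym.1 h))]
      simp
  have hsw : Integrable (fun z : EE N × EE N => f (Prod.swap z)) := hfint.swap
  rw [hsum, integral_add hfint hsw, hswap]
  linarith

lemma main_GG (N : ℕ) (hN : 0 < N) (s : ℝ) (hs0 : 0 < s) (hs1 : s < 1)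
    (R : ℝ) (ha : 0 < (N : ℝ) - 2 * s) (hR : 1 < R) (φ : EE N → ℝ)
    (hφ_smooth : ContDiff ℝ (⊤ : ℕ∞) φ) (hφ_supp : HasCompactSupport φ)
    (hφ_loc : tsupport φ ⊆ {x : EE N | R < ‖x‖})
    (hφ_nonneg : ∀ x, 0 ≤ φ x) :
    0 ≤ ∫ z : EE N × EE N,
      (GG N ((N : ℝ) - 2 * s) R z.1 - GG N ((N : ℝ) - 2 * s) R z.2) * (φ z.1 - φ z.2) *
        ‖z.1 - z.2‖ ^ (-((N : ℝ) + 2 * s)) := by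
  have hI := main_int N hN s hs0 hs1 _ R ha hR φ hφ_smooth hφ_supp
  set H : EE N × EE N → ℝ := fun z =>
      (GG N ((N : ℝ) - 2 * s) R z.1 - GG N ((N : ℝ) - 2 * s) R z.2) * (φ z.1 - φ z.2) *
        ‖z.1 - z.2‖ ^ (-((N : ℝ) + 2 * s)) with hH
  have hlim : Tendsto (fun n : ℕ => ∫ z, (A2 N (1 / ((n : ℝ) + 1))).indicator H z) atTop
      (𝓝 (∫ z, H z)) := by
    refine tendsto_integral_of_dominated_convergence (fun z => ‖H z‖) ?_ hI.norm ?_ ?_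
    · intro n
      exact hI.aestronglyMeasurable.indicator (A2_meas N _)
    · intro n
      exact Eventually.of_forall fun z => norm_indicator_le_norm_self _ _
    · refine Eventually.of_forall fun z => ?_
      by_cases hz : z.1 = z.2
      · have h0 : H z = 0 := by simp [hH, hz]
        have : ∀ n : ℕ, (A2 N (1 / ((n : ℝ) + 1))).indicator H z = 0 := fun n => by
          simp [Set.indicator, h0]
        simp only [this, h0]
        exact tendsto_const_nhds
      · have hpos : 0 < ‖z.1 - z.2‖ ^ 2 := by
          have := norm_pos_iff.2 (sub_ne_zero.2 hz)
          positivity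
        have ht : Tendsto (fun n : ℕ => 1 / ((n : ℝ) + 1) * ‖z.1‖ * ‖z.2‖) atTop (𝓝 0) := by
          have := (tendsto_one_div_add_atTop_nhds_zero_nat (𝕜 := ℝ)).mul_const (‖z.1‖ * ‖z.2‖)
          simpa [mul_assoc] using this
        refine tendsto_const_nhds.congr' ?_
        filter_upwards [ht.eventually (gt_mem_nhds hpos)] with n hn
        exact (Set.indicator_of_mem (show z ∈ A2 N _ from hn) H).symm
  refine ge_of_tendsto' hlim fun n => ?_
  exact trunc_nonneg N hN s hs0 hs1 R ha hR φ hφ_smooth.continuous hφ_supp hφ_loc hφ_nonneg _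
    (by positivity)

/-- `Γ*` is a weak supersolution of the fractional Laplacian
outside `B̄_R`: for every nonnegative `φ ∈ C_c^∞(ℝ^N ∖ B̄_R)` the integral
`∬ (Γ*(x)−Γ*(y))(φ(x)−φ(y)) |x−y|^{−(N+2s)}` converges absolutely and is `≥ 0`. -/
theorem statement_15 (N : ℕ) (s : ℝ) (hs0 : 0 < s) (hs1 : s < 1) (hN : 2 * s < N)
    (R : ℝ) (hR : 1 < R)
    (φ : EuclideanSpace ℝ (Fin N) → ℝ)
    (hφ_smooth : ContDiff ℝ (⊤ : ℕ∞) φ) (hφ_supp : HasCompactSupport φ)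
    (hφ_loc : tsupport φ ⊆ {x : EuclideanSpace ℝ (Fin N) | R < ‖x‖})
    (hφ_nonneg : ∀ x, 0 ≤ φ x) :
    Integrable (fun z : EuclideanSpace ℝ (Fin N) × EuclideanSpace ℝ (Fin N) =>
      (Gammastar N s R z.1 - Gammastar N s R z.2) * (φ z.1 - φ z.2) *
        ‖z.1 - z.2‖ ^ (-((N : ℝ) + 2 * s))) ∧
    0 ≤ ∫ z : EuclideanSpace ℝ (Fin N) × EuclideanSpace ℝ (Fin N),
      (Gammastar N s R z.1 - Gammastar N s R z.2) * (φ z.1 - φ z.2) *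
        ‖z.1 - z.2‖ ^ (-((N : ℝ) + 2 * s)) := by
  have hNpos : 0 < N := by
    have : (0 : ℝ) < N := by linarith
    exact_mod_cast this
  have ha : 0 < (N : ℝ) - 2 * s := by linarith
  have : Nonempty (Fin N) := ⟨⟨0, hNpos⟩⟩
  have : Nontrivial (EE N) := inferInstance
  have h0 : ∀ᵐ y : EE N, y ≠ 0 := by
    simp [ae_iff]
  have hae : (fun z : EE N × EE N =>
      (GG N ((N : ℝ) - 2 * s) R z.1 - GG N ((N : ℝ) - 2 * s) R z.2) * (φ z.1 - φ z.2) *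
        ‖z.1 - z.2‖ ^ (-((N : ℝ) + 2 * s))) =ᵐ[volume] (fun z : EE N × EE N =>
      (Gammastar N s R z.1 - Gammastar N s R z.2) * (φ z.1 - φ z.2) *
        ‖z.1 - z.2‖ ^ (-((N : ℝ) + 2 * s))) := by
    have h1 : ∀ᵐ z : EE N × EE N, z.1 ≠ 0 := Measure.quasiMeasurePreserving_fst.ae h0
    have h2 : ∀ᵐ z : EE N × EE N, z.2 ≠ 0 := Measure.quasiMeasurePreserving_snd.ae h0
    filter_upwards [h1, h2] with z hz1 hz2
    rw [← Gammastar_eq' N _ R ha hR z.1 hz1, ← Gammastar_eq' N _ R ha hR z.2 hz2]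
    rfl
  refine ⟨(main_int N hNpos s hs0 hs1 _ R ha hR φ hφ_smooth hφ_supp).congr hae, ?_⟩
  rw [← integral_congr_ae hae]
  exact main_GG N hNpos s hs0 hs1 R ha hR φ hφ_smooth hφ_supp hφ_loc hφ_nonneg
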